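/- arXiv:1608.08184 — 3 statements merged into one kernel-verified Lean document; each statement's English description precedes it below -/
import Mathlib

section
/- There exists a constant C > 0, independent of p, such that for every integer p ≥ 0 and every polynomial v of degree at most p, ‖(I v)'‖_{L²(−1,1)} ≤ C (p+1)² ‖v‖_{L²(−1,1)}. -/
open Polynomial

/-- The `k`-th Legendre polynomial (Rodrigues' formula), normalized so that `L_k(1) = 1`
and `∫_{−1}^{1} L_k L_j ds = 2δ_{kj}/(2k+1)`. -/
noncomputable def legendre (k : ℕ) : Polynomial ℝ :=
  ((2 ^ k * (Nat.factorial k) : ℝ))⁻¹ •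
    ((fun q => Polynomial.derivative q)^[k] ((Polynomial.X ^ 2 - 1) ^ k))

/-- The reconstruction operator `I : P_p → P_{p+1}`,
`I v := v − v(−1)·(−1)^p (L_p − L_{p+1})/2`. -/
noncomputable def recon (p : ℕ) (v : Polynomial ℝ) : Polynomial ℝ :=
  v - (v.eval (-1) * (-1 : ℝ) ^ p / 2) • (legendre p - legendre (p + 1))

/-- Integral of a polynomial over (-1,1). -/
noncomputable def polyInt (q : Polynomial ℝ) : ℝ := ∫ s in (-1 : ℝ)..1, q.eval s

theorem polyInt_ii (q : Polynomial ℝ) :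
    IntervalIntegrable (fun s => q.eval s) MeasureTheory.volume (-1) 1 :=
  q.continuous.intervalIntegrable _ _

theorem polyInt_add (q r : Polynomial ℝ) : polyInt (q + r) = polyInt q + polyInt r := by
  unfold polyInt
  simp only [eval_add]
  exact intervalIntegral.integral_add (polyInt_ii q) (polyInt_ii r)

theorem polyInt_C_mul (c : ℝ) (q : Polynomial ℝ) : polyInt (C c * q) = c * polyInt q := by
  unfold polyInt
  simp only [eval_mul, eval_C]
  exact intervalIntegral.integral_const_mul _ _

theorem polyInt_sum (n : ℕ) (f : ℕ → Polynomial ℝ) :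
    polyInt (∑ k ∈ Finset.range n, f k) = ∑ k ∈ Finset.range n, polyInt (f k) := by
  induction n with
  | zero => simp [polyInt]
  | succ n ih => rw [Finset.sum_range_succ, Finset.sum_range_succ, polyInt_add, ih]

theorem polyInt_mono (q r : Polynomial ℝ) (h : ∀ s, q.eval s ≤ r.eval s) :
    polyInt q ≤ polyInt r :=
  intervalIntegral.integral_mono_on (by norm_num) (polyInt_ii q) (polyInt_ii r) (fun s _ => h s)

theorem polyInt_deriv (q : Polynomial ℝ) :
    polyInt (derivative q) = q.eval 1 - q.eval (-1) := by
  unfold polyInt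
  exact intervalIntegral.integral_eq_sub_of_hasDerivAt (fun x _ => q.hasDerivAt x)
    (polyInt_ii _)

theorem polyInt_parts (q r : Polynomial ℝ) :
    polyInt (derivative q * r) + polyInt (q * derivative r)
      = q.eval 1 * r.eval 1 - q.eval (-1) * r.eval (-1) := by
  rw [← polyInt_add, ← derivative_mul, polyInt_deriv, eval_mul, eval_mul]

theorem iter_eval (a : ℝ) (j : ℕ) (q : Polynomial ℝ) :
    ((fun q => derivative q)^[j] q).eval a = (Nat.factorial j : ℝ) * (taylor a q).coeff j := by
  rw [taylor_coeff]
  have h := congrFun (factorial_smul_hasseDeriv (R := ℝ) (k := j)) q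
  have h2 : ((fun q : Polynomial ℝ => derivative q)^[j] q) = (Nat.factorial j) • hasseDeriv j q :=
    h.symm
  rw [h2, eval_smul, nsmul_eq_mul]

theorem taylor_W (a : ℝ) (ha : a ^ 2 = 1) (k : ℕ) :
    taylor a ((X ^ 2 - 1 : Polynomial ℝ) ^ k) = (X + C (2 * a)) ^ k * X ^ k := by
  rw [taylor_apply]
  simp only [pow_comp, sub_comp, X_comp, one_comp]
  rw [← mul_pow]
  congr 1
  have : (1 : Polynomial ℝ) = C (a ^ 2) := by rw [ha]; simp
  rw [this]; simp only [C_mul, C_pow]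
  have h2 : (C 2 : Polynomial ℝ) = 2 := rfl
  rw [h2]; ring

theorem W_vanish (a : ℝ) (ha : a ^ 2 = 1) (k j : ℕ) (h : j < k) :
    ((fun q => derivative q)^[j] ((X ^ 2 - 1 : Polynomial ℝ) ^ k)).eval a = 0 := by
  rw [iter_eval, taylor_W a ha, coeff_mul_X_pow', if_neg (by omega), mul_zero]

theorem leg_eval (a : ℝ) (ha : a ^ 2 = 1) (k : ℕ) : (legendre k).eval a = a ^ k := by
  unfold legendre
  rw [eval_smul, iter_eval, taylor_W a ha, coeff_mul_X_pow', if_pos le_rfl, Nat.sub_self,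
    coeff_zero_eq_eval_zero]
  have := Nat.factorial_pos k
  simp [mul_pow]
  field_simp

theorem leg_deriv_eval (a : ℝ) (ha : a ^ 2 = 1) (k : ℕ) :
    (derivative (legendre k)).eval a = a ^ (k + 1) * (k * (k + 1) / 2) := by
  unfold legendre
  rw [derivative_smul, eval_smul]
  have h := iter_eval a (k + 1) ((X ^ 2 - 1 : Polynomial ℝ) ^ k)
  rw [Function.iterate_succ_apply'] at h
  rw [h, taylor_W a ha, coeff_mul_X_pow', if_pos (by omega), Nat.add_sub_cancel_left]
  have := Nat.factorial_pos k
  have h1 : ((X + C (2 * a)) ^ k : Polynomial ℝ).coeff 1 = k * (2 * a) ^ (k - 1) := by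
    rw [coeff_X_add_C_pow]; simp [mul_comm]
  rw [h1, Nat.factorial_succ]
  rcases k with _ | k
  · simp
  · have e : a ^ (k + 1 + 1) = a ^ k := by
      rw [show k + 1 + 1 = k + 2 by omega, pow_add, ha, mul_one]
    rw [e]
    simp [mul_pow]
    field_simp
    ring

theorem leg_natDegree (k : ℕ) : (legendre k).natDegree ≤ k := by
  unfold legendre
  refine (natDegree_smul_le _ _).trans ?_
  refine (natDegree_iterate_derivative _ k).trans ?_
  have h1 : ((X ^ 2 - 1 : Polynomial ℝ) ^ k).natDegree ≤ k * 2 := by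
    refine natDegree_pow_le_of_le k ?_
    compute_degree
  omega

theorem iter_parts (k j : ℕ) (q : Polynomial ℝ) (h : j ≤ k) :
    polyInt (((fun q => derivative q)^[j] ((X ^ 2 - 1 : Polynomial ℝ) ^ k)) * q)
      = (-1) ^ j * polyInt ((X ^ 2 - 1 : Polynomial ℝ) ^ k * ((fun q => derivative q)^[j] q)) := by
  induction j generalizing q with
  | zero => simp
  | succ j ih =>
    have e := polyInt_parts ((fun q => derivative q)^[j] ((X ^ 2 - 1 : Polynomial ℝ) ^ k)) q
    rw [W_vanish 1 (by norm_num) k j (by omega), W_vanish (-1) (by norm_num) k j (by omega),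
      ih _ (by omega)] at e
    rw [Function.iterate_succ_apply', Function.iterate_succ_apply]
    rw [pow_succ (-1 : ℝ)]
    linarith

theorem leg_orth (k : ℕ) (q : Polynomial ℝ) (h : q.degree < k) :
    polyInt (legendre k * q) = 0 := by
  unfold legendre
  rw [smul_eq_C_mul, mul_assoc, polyInt_C_mul, iter_parts k k q le_rfl]
  have : (fun q : Polynomial ℝ => derivative q)^[k] q = 0 :=
    iterate_derivative_eq_zero_of_degree_lt h
  rw [this]; simp [polyInt]

theorem leg_norm (k : ℕ) : polyInt (legendre k * legendre k) = 2 / (2 * k + 1) := by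
  have e := polyInt_parts (legendre k) (X * legendre k)
  have hr : (X * derivative (legendre k) - C (k : ℝ) * legendre k).degree < (k : WithBot ℕ) := by
    rw [degree_lt_iff_coeff_zero]
    intro m hm
    rw [coeff_sub, coeff_C_mul]
    rcases m with _ | m
    · obtain rfl : k = 0 := by omega
      simp
    · rw [coeff_X_mul, coeff_derivative]
      rcases Nat.lt_or_ge k (m + 1) with h | h
      · rw [coeff_eq_zero_of_natDegree_lt (lt_of_le_of_lt (leg_natDegree k) h)]; simp
      · obtain rfl : k = m + 1 := by omega
        push_cast; ring
  have o := leg_orth k _ hr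
  have s1 : derivative (legendre k) * (X * legendre k)
      = legendre k * (X * derivative (legendre k) - C (k : ℝ) * legendre k)
        + C (k : ℝ) * (legendre k * legendre k) := by ring
  have s2 : legendre k * derivative (X * legendre k)
      = legendre k * (X * derivative (legendre k) - C (k : ℝ) * legendre k)
        + C (k + 1 : ℝ) * (legendre k * legendre k) := by
    rw [derivative_mul, derivative_X, C_add, C_1]; ring
  rw [s1, s2, polyInt_add, polyInt_add, o, polyInt_C_mul, polyInt_C_mul] at e
  simp only [eval_mul, eval_X, leg_eval 1 (by norm_num), leg_eval (-1) (by norm_num)] at e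
  have h1 : ((-1 : ℝ) ^ k) * (-1) ^ k = 1 := by rw [← mul_pow]; norm_num
  have h2 : (0 : ℝ) < 2 * k + 1 := by positivity
  rw [eq_div_iff h2.ne']
  simp only [one_pow] at e
  linarith

theorem leg_deriv_norm (k : ℕ) :
    polyInt (derivative (legendre k) * derivative (legendre k)) = k * (k + 1) := by
  have e := polyInt_parts (legendre k) (derivative (legendre k))
  have hd : (derivative (derivative (legendre k))).degree < k := by
    rcases k with _ | k
    · have : derivative (legendre 0) = 0 := by
        simp [legendre]
      rw [this]; simp
    · refine (degree_le_natDegree).trans_lt ?_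
      have h1 := natDegree_derivative_le (derivative (legendre (k+1)))
      have h2 := natDegree_derivative_le (legendre (k+1))
      have h3 := leg_natDegree (k+1)
      have : (derivative (derivative (legendre (k + 1)))).natDegree < k + 1 := by omega
      exact_mod_cast this
  rw [leg_orth k _ hd, leg_eval 1 (by norm_num), leg_eval (-1) (by norm_num),
    leg_deriv_eval 1 (by norm_num), leg_deriv_eval (-1) (by norm_num)] at e
  have h1 : ((-1 : ℝ) ^ k) * (-1) ^ k = 1 := by rw [← mul_pow]; norm_num
  rw [pow_succ (-1 : ℝ)] at e
  simp only [one_pow] at e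
  linear_combination e + (k * (k + 1) / 2 : ℝ) * h1

theorem leg_coeff (k : ℕ) : (legendre k).coeff k ≠ 0 := by
  intro h
  have hd : (legendre k).degree < k := by
    rw [degree_lt_iff_coeff_zero]
    intro m hm
    rcases hm.eq_or_lt with rfl | hm
    · exact h
    · exact coeff_eq_zero_of_natDegree_lt (lt_of_le_of_lt (leg_natDegree k) hm)
  have o := leg_orth k _ hd
  rw [leg_norm] at o
  have : (0 : ℝ) < 2 / (2 * k + 1) := by positivity
  linarith

theorem leg_expand (n : ℕ) (v : Polynomial ℝ) (hv : v.degree < n) :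
    ∃ a : ℕ → ℝ, v = ∑ k ∈ Finset.range n, C (a k) * legendre k ∧
      polyInt (v * v) = ∑ k ∈ Finset.range n, a k ^ 2 * (2 / (2 * k + 1)) := by
  induction n generalizing v with
  | zero =>
    have : v = 0 := by
      rw [← degree_eq_bot]
      exact Nat.WithBot.lt_zero_iff.mp (by simpa using hv)
    refine ⟨0, ?_, ?_⟩ <;> simp [this, polyInt]
  | succ n ih =>
    set c := v.coeff n / (legendre n).coeff n with hc
    have hw : (v - C c * legendre n).degree < n := by
      rw [degree_lt_iff_coeff_zero] at hv ⊢
      intro m hm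
      rw [coeff_sub, coeff_C_mul]
      rcases hm.eq_or_lt with rfl | hm
      · rw [hc, div_mul_cancel₀ _ (leg_coeff _), sub_self]
      · rw [hv m hm, coeff_eq_zero_of_natDegree_lt (lt_of_le_of_lt (leg_natDegree n) hm)]; simp
    obtain ⟨a, h1, h2⟩ := ih _ hw
    have o := leg_orth n _ hw
    refine ⟨fun k => if k = n then c else a k, ?_, ?_⟩
    · beta_reduce
      rw [Finset.sum_range_succ, if_pos rfl]
      rw [Finset.sum_congr rfl (g := fun k => C (a k) * legendre k), ← h1]
      · ring
      · intro k hk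
        rw [if_neg (Finset.mem_range.mp hk).ne]
    · beta_reduce
      rw [Finset.sum_range_succ, if_pos rfl]
      rw [Finset.sum_congr rfl (g := fun k => a k ^ 2 * (2 / (2 * (k : ℝ) + 1))), ← h2]
      · have e : v * v = (v - C c * legendre n) * (v - C c * legendre n)
            + (C (2 * c) * (legendre n * (v - C c * legendre n))
              + C (c ^ 2) * (legendre n * legendre n)) := by
          simp only [C_mul, C_pow]
          have h2 : (C 2 : Polynomial ℝ) = 2 := rfl
          rw [h2]; ring
        conv_lhs => rw [e]
        rw [polyInt_add, polyInt_add, polyInt_C_mul, polyInt_C_mul, o, leg_norm]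
        ring
      · intro k hk
        rw [if_neg (Finset.mem_range.mp hk).ne]

/-- Weighted Cauchy–Schwarz. -/
theorem wcs (n : ℕ) (a b : ℕ → ℝ) :
    (∑ k ∈ Finset.range n, a k * b k) ^ 2 ≤
      (∑ k ∈ Finset.range n, a k ^ 2 * (2 / (2 * k + 1))) *
        ∑ k ∈ Finset.range n, ((2 * k + 1) / 2) * b k ^ 2 := by
  refine Finset.sum_sq_le_sum_mul_sum_of_sq_le_mul _ ?_ ?_ ?_
  · intros; positivity
  · intros; positivity
  · intro k _
    have h2 : (0 : ℝ) < 2 * k + 1 := by positivity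
    apply le_of_eq
    field_simp

theorem sum_odd (n : ℕ) : ∑ k ∈ Finset.range n, ((2 * (k : ℝ) + 1) / 2) = n ^ 2 / 2 := by
  induction n with
  | zero => simp
  | succ n ih => rw [Finset.sum_range_succ, ih]; push_cast; ring

theorem sum_odd2 (n : ℕ) :
    ∑ k ∈ Finset.range n, ((2 * (k : ℝ) + 1) / 2 * (k * (k + 1))) ≤ n ^ 4 := by
  induction n with
  | zero => simp
  | succ n ih =>
    rw [Finset.sum_range_succ]; push_cast
    have : (0 : ℝ) ≤ n := by positivity
    have : (0 : ℝ) ≤ (n : ℝ) ^ 2 := by positivity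
    have : (0 : ℝ) ≤ (n : ℝ) ^ 3 := by positivity
    nlinarith

theorem trace_bound (n : ℕ) (v : Polynomial ℝ) (hv : v.degree < n) :
    v.eval (-1) ^ 2 ≤ polyInt (v * v) * (n ^ 2 / 2) := by
  obtain ⟨a, h1, h2⟩ := leg_expand n v hv
  have e : v.eval (-1) = ∑ k ∈ Finset.range n, a k * (-1) ^ k := by
    conv_lhs => rw [h1]
    rw [eval_finsetSum]
    refine Finset.sum_congr rfl fun k _ => ?_
    rw [eval_mul, eval_C, leg_eval (-1) (by norm_num)]
  rw [e, h2, ← sum_odd]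
  refine (wcs n a _).trans_eq ?_
  congr 1
  refine Finset.sum_congr rfl fun k _ => ?_
  rw [← pow_mul, mul_comm k 2, pow_mul]; norm_num

theorem inverse_bound (n : ℕ) (v : Polynomial ℝ) (hv : v.degree < n) :
    polyInt (derivative v * derivative v) ≤ polyInt (v * v) * n ^ 4 := by
  obtain ⟨a, h1, h2⟩ := leg_expand n v hv
  have hN : 0 ≤ polyInt (v * v) := by rw [h2]; positivity
  have e : derivative v = ∑ k ∈ Finset.range n, C (a k) * derivative (legendre k) := by
    conv_lhs => rw [h1]
    rw [derivative_sum]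
    refine Finset.sum_congr rfl fun k _ => ?_
    rw [derivative_C_mul]
  have m : polyInt (derivative v * derivative v) ≤ polyInt (C (polyInt (v * v)) *
      ∑ k ∈ Finset.range n, C ((2 * (k : ℝ) + 1) / 2) *
        (derivative (legendre k) * derivative (legendre k))) := by
    refine polyInt_mono _ _ fun s => ?_
    rw [eval_mul, ← sq, e, h2, eval_mul, eval_C, eval_finsetSum, eval_finsetSum]
    simp only [eval_mul, eval_C]
    refine (wcs n a _).trans_eq ?_
    simp only [← sq]
  refine m.trans ?_
  rw [polyInt_C_mul, polyInt_sum]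
  simp only [polyInt_C_mul, leg_deriv_norm]
  exact mul_le_mul_of_nonneg_left (sum_odd2 n) hN

/-- **Inverse inequality for the reconstruction.** There is a constant `C > 0`, independent
of `p`, such that for every `p ≥ 0` and every polynomial `v` of degree at most `p`,
`‖(I v)'‖_{L²(−1,1)} ≤ C (p+1)² ‖v‖_{L²(−1,1)}`. -/
theorem recon_inverse_inequality :
    ∃ C : ℝ, 0 < C ∧ ∀ p : ℕ, ∀ v : Polynomial ℝ, v.natDegree ≤ p →
      Real.sqrt (∫ s in (-1 : ℝ)..1, ((Polynomial.derivative (recon p v)).eval s) ^ 2)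
        ≤ C * ((p : ℝ) + 1) ^ 2 * Real.sqrt (∫ s in (-1 : ℝ)..1, (v.eval s) ^ 2) := by
  refine ⟨3, by norm_num, fun p v hv => ?_⟩
  have hd : v.degree < ((p + 1 : ℕ) : WithBot ℕ) := by
    refine degree_le_natDegree.trans_lt ?_
    exact_mod_cast Nat.lt_succ_of_le hv
  have i1 : (∫ s in (-1 : ℝ)..1, ((Polynomial.derivative (recon p v)).eval s) ^ 2)
      = polyInt (derivative (recon p v) * derivative (recon p v)) := by
    simp only [polyInt, eval_mul, sq]
  have i2 : (∫ s in (-1 : ℝ)..1, (v.eval s) ^ 2) = polyInt (v * v) := by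
    simp only [polyInt, eval_mul, sq]
  rw [i1, i2]
  have ht := trace_bound (p + 1) v hd
  have hi := inverse_bound (p + 1) v hd
  have hN : 0 ≤ polyInt (v * v) := by
    obtain ⟨a, h1, h2⟩ := leg_expand (p + 1) v hd
    rw [h2]; positivity
  set N := polyInt (v * v)
  set t := v.eval (-1) * (-1 : ℝ) ^ p / 2 with htdef
  have ht2 : t ^ 2 = v.eval (-1) ^ 2 / 4 := by
    rw [htdef, div_pow, mul_pow, ← pow_mul, mul_comm p 2, pow_mul]; norm_num
  have m : polyInt (derivative (recon p v) * derivative (recon p v)) ≤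
      polyInt (C 3 * (derivative v * derivative v)
        + (C (3 * t ^ 2) * (derivative (legendre p) * derivative (legendre p))
        + C (3 * t ^ 2) * (derivative (legendre (p + 1)) * derivative (legendre (p + 1))))) := by
    refine polyInt_mono _ _ fun s => ?_
    unfold recon
    rw [← htdef]
    simp only [derivative_sub, derivative_smul, eval_sub, eval_smul, eval_mul, eval_add, eval_C,
      smul_eq_mul]
    generalize (derivative v).eval s = x
    generalize (derivative (legendre p)).eval s = y
    generalize (derivative (legendre (p + 1))).eval s = z
    nlinarith [sq_nonneg (x + t * y), sq_nonneg (x - t * z), sq_nonneg (t * y + t * z)]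
  rw [polyInt_add, polyInt_add, polyInt_C_mul, polyInt_C_mul, polyInt_C_mul, leg_deriv_norm,
    leg_deriv_norm, ht2] at m
  push_cast at m ht hi
  have key : polyInt (derivative (recon p v) * derivative (recon p v)) ≤
      (3 * ((p : ℝ) + 1) ^ 2) ^ 2 * N := by
    refine m.trans ?_
    have hp : (0 : ℝ) ≤ p := by positivity
    have q1 : (p : ℝ) * (p + 1) + (p + 1) * (p + 1 + 1) = 2 * (p + 1) ^ 2 := by ring
    have q2 := mul_le_mul_of_nonneg_right ht (by positivity : (0 : ℝ) ≤ 2 * ((p : ℝ) + 1) ^ 2)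
    have q3 : 0 ≤ N * ((p : ℝ) + 1) ^ 4 := by positivity
    nlinarith
  calc _ ≤ Real.sqrt ((3 * ((p : ℝ) + 1) ^ 2) ^ 2 * N) := Real.sqrt_le_sqrt key
    _ = _ := by rw [Real.sqrt_mul (by positivity), Real.sqrt_sq (by positivity)]
end

section
/- There exists a constant C > 0, independent of p and q, such that for every integer p ≥ 2 and every integer q with 0 ≤ q ≤ p−1, the matrices T and T̂_q satisfy ‖T − T̂_q‖₂ ≤ C (q+1)^{−2}, where ‖·‖₂ denotes the matrix 2-norm (spectral norm). -/
open Polynomial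

/-- The basis polynomials `ψ_0 := (L_1 + L_0)/√2`,
`ψ_k := (L_{k+1} − L_{k−1})/√(4k+2)` for `1 ≤ k ≤ p−1`, and
`ψ_p := (L_p − L_{p−1})/√(4p+2)`. -/
noncomputable def psi (p k : ℕ) : Polynomial ℝ :=
  if k = 0 then (Real.sqrt 2)⁻¹ • (legendre 1 + legendre 0)
  else if k = p then (Real.sqrt (4 * (p : ℝ) + 2))⁻¹ • (legendre p - legendre (p - 1))
  else (Real.sqrt (4 * (k : ℝ) + 2))⁻¹ • (legendre (k + 1) - legendre (k - 1))

/-- The symmetric `(p+1) × (p+1)` matrix `T` with entries `T_{kj} := ∫_{−1}^{1} ψ_k ψ_j ds`. -/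
noncomputable def Tmat (p : ℕ) : Matrix (Fin (p + 1)) (Fin (p + 1)) ℝ :=
  fun k j => ∫ s in (-1 : ℝ)..1, (psi p (k : ℕ)).eval s * (psi p (j : ℕ)).eval s

/-- The truncated matrix `T̂_q`, whose `(k,j)` entry equals `T_{kj}` if `k ≤ q` and `j ≤ q`,
and `0` otherwise. -/
noncomputable def Thatmat (p q : ℕ) : Matrix (Fin (p + 1)) (Fin (p + 1)) ℝ :=
  fun k j => if (k : ℕ) ≤ q ∧ (j : ℕ) ≤ q then Tmat p k j else 0


/-- L2 inner product on [-1,1]. -/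
noncomputable def ipL (f g : Polynomial ℝ) : ℝ := ∫ s in (-1 : ℝ)..1, f.eval s * g.eval s

lemma poly_ii (f : Polynomial ℝ) :
    IntervalIntegrable (fun s => f.eval s) MeasureTheory.volume (-1 : ℝ) 1 :=
  f.continuous.intervalIntegrable _ _

lemma poly_ii2 (f g : Polynomial ℝ) :
    IntervalIntegrable (fun s => f.eval s * g.eval s) MeasureTheory.volume (-1 : ℝ) 1 :=
  (f.continuous.mul g.continuous).intervalIntegrable _ _

lemma ipL_comm (f g : Polynomial ℝ) : ipL f g = ipL g f := by
  unfold ipL; congr 1; funext s; ring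

lemma ipL_add_left (f g h : Polynomial ℝ) : ipL (f + g) h = ipL f h + ipL g h := by
  unfold ipL
  rw [← intervalIntegral.integral_add (poly_ii2 f h) (poly_ii2 g h)]
  congr 1; funext s; simp; ring

lemma ipL_smul_left (c : ℝ) (f h : Polynomial ℝ) : ipL (c • f) h = c * ipL f h := by
  unfold ipL
  rw [← intervalIntegral.integral_const_mul]
  congr 1; funext s; simp; ring

lemma ipL_sub_left (f g h : Polynomial ℝ) : ipL (f - g) h = ipL f h - ipL g h := by
  unfold ipL
  rw [← intervalIntegral.integral_sub (poly_ii2 f h) (poly_ii2 g h)]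
  congr 1; funext s; simp; ring

lemma ipL_add_right (f g h : Polynomial ℝ) : ipL h (f + g) = ipL h f + ipL h g := by
  rw [ipL_comm, ipL_add_left, ipL_comm f, ipL_comm g]

lemma ipL_sub_right (f g h : Polynomial ℝ) : ipL h (f - g) = ipL h f - ipL h g := by
  rw [ipL_comm, ipL_sub_left, ipL_comm f, ipL_comm g]

lemma ipL_smul_right (c : ℝ) (f h : Polynomial ℝ) : ipL h (c • f) = c * ipL h f := by
  rw [ipL_comm, ipL_smul_left, ipL_comm f]

lemma ipL_self_nonneg (f : Polynomial ℝ) : 0 ≤ ipL f f := by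
  unfold ipL
  apply intervalIntegral.integral_nonneg (by norm_num)
  intro u _
  exact mul_self_nonneg _

lemma abs_ipL_le (f g : Polynomial ℝ) : |ipL f g| ≤ (ipL f f + ipL g g) / 2 := by
  have h1 := ipL_self_nonneg (f + g)
  have h2 := ipL_self_nonneg (f - g)
  simp only [ipL_add_left, ipL_add_right, ipL_sub_left, ipL_sub_right] at h1 h2
  rw [ipL_comm g f] at h1 h2
  rw [abs_le]; constructor <;> linarith

lemma ipL_deriv (u v : Polynomial ℝ) (h1 : u.eval 1 = 0) (h2 : u.eval (-1) = 0) :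
    ipL (derivative u) v = - ipL u (derivative v) := by
  have h := intervalIntegral.integral_eq_sub_of_hasDerivAt
    (a := (-1:ℝ)) (b := 1) (f := fun s => (u * v).eval s)
    (f' := fun s => (derivative (u * v)).eval s)
    (fun x _ => (u * v).hasDerivAt x) (poly_ii _)
  have h3 : ipL (derivative u) v + ipL u (derivative v) = 0 := by
    unfold ipL
    rw [← intervalIntegral.integral_add (poly_ii2 _ _) (poly_ii2 _ _)]
    simp only [eval_mul, h1, h2, derivative_mul, eval_add] at h
    rw [h]; ring
  linarith

lemma ipL_iter (n : ℕ) : ∀ (u v : Polynomial ℝ),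
    (∀ i < n, (derivative^[i] u).eval 1 = 0 ∧ (derivative^[i] u).eval (-1) = 0) →
    ipL (derivative^[n] u) v = (-1) ^ n * ipL u (derivative^[n] v) := by
  induction n with
  | zero => intro u v _; simp
  | succ n ih =>
    intro u v h
    rw [Function.iterate_succ_apply', ipL_deriv _ _ (h n (by omega)).1 (h n (by omega)).2,
      ih u (derivative v) (fun i hi => h i (by omega)), Function.iterate_succ_apply]
    ring

noncomputable def wpol (n : ℕ) : Polynomial ℝ := (X ^ 2 - 1) ^ n

lemma wpol_vanish (n i : ℕ) (hi : i < n) :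
    (derivative^[i] (wpol n)).eval 1 = 0 ∧ (derivative^[i] (wpol n)).eval (-1) = 0 := by
  obtain ⟨r, hr⟩ := Polynomial.pow_sub_dvd_iterate_derivative_pow (X ^ 2 - 1 : Polynomial ℝ) n i
  unfold wpol
  rw [hr]
  have : n - i ≠ 0 := by omega
  simp [this]

lemma legendre_eq (n : ℕ) :
    legendre n = ((2 ^ n * (Nat.factorial n) : ℝ))⁻¹ • (derivative^[n] (wpol n)) := rfl

lemma wpol_monic (n : ℕ) : (wpol n).Monic ∧ (wpol n).natDegree = 2 * n := by
  have h : (X ^ 2 - 1 : Polynomial ℝ).Monic := by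
    simpa using Polynomial.monic_X_pow_sub_C (1:ℝ) (n := 2) (by norm_num)
  have h2 : (X ^ 2 - 1 : Polynomial ℝ).natDegree = 2 := by
    simpa using Polynomial.natDegree_X_pow_sub_C (n := 2) (r := (1:ℝ))
  refine ⟨h.pow n, ?_⟩
  unfold wpol
  rw [h.natDegree_pow, h2]; ring

lemma legendre_natDegree (n : ℕ) : (legendre n).natDegree ≤ n := by
  rw [legendre_eq]
  refine (Polynomial.natDegree_smul_le _ _).trans ?_
  refine (Polynomial.natDegree_iterate_derivative _ _).trans ?_
  rw [(wpol_monic n).2]; omega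

lemma ipL_zero_right (f : Polynomial ℝ) : ipL f 0 = 0 := by simp [ipL]

lemma ipL_legendre_lt (m n : ℕ) (h : m < n) : ipL (legendre n) (legendre m) = 0 := by
  rw [legendre_eq n, ipL_smul_left, ipL_iter n _ _ (wpol_vanish n),
    Polynomial.iterate_derivative_eq_zero (lt_of_le_of_lt (legendre_natDegree m) h),
    ipL_zero_right]
  simp

lemma ipL_legendre_ne (m n : ℕ) (h : m ≠ n) : ipL (legendre n) (legendre m) = 0 := by
  rcases lt_or_gt_of_ne h with h | h
  · exact ipL_legendre_lt m n h
  · rw [ipL_comm]; exact ipL_legendre_lt n m h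

lemma wpol_top (n : ℕ) :
    derivative^[n] (derivative^[n] (wpol n)) = C ((2 * n).factorial : ℝ) := by
  rw [← Function.iterate_add_apply]
  have hd : (derivative^[n + n] (wpol n)).natDegree ≤ 0 := by
    refine (Polynomial.natDegree_iterate_derivative _ _).trans ?_
    rw [(wpol_monic n).2]; omega
  rw [Polynomial.eq_C_of_natDegree_le_zero hd, Polynomial.coeff_iterate_derivative]
  have : (wpol n).coeff (0 + (n + n)) = 1 := by
    have := (wpol_monic n).1.coeff_natDegree
    rw [(wpol_monic n).2] at this
    rw [← this]; congr 1; ring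
  rw [this, show 0 + (n + n) = 2 * n by ring, show n + n = 2 * n by ring, Nat.descFactorial_self]
  simp

noncomputable def Jw (n : ℕ) : ℝ := ∫ s in (-1 : ℝ)..1, (1 - s ^ 2) ^ n

lemma Jw_succ (n : ℕ) : (2 * n + 3 : ℝ) * Jw (n + 1) = (2 * n + 2) * Jw n := by
  have h := intervalIntegral.integral_eq_sub_of_hasDerivAt
    (a := (-1:ℝ)) (b := 1) (f := fun s => s * (1 - s ^ 2) ^ (n + 1))
    (f' := fun s => (2 * n + 3 : ℝ) * (1 - s ^ 2) ^ (n + 1) - (2 * n + 2) * (1 - s ^ 2) ^ n)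
    (fun x _ => by
      have h1 : HasDerivAt (fun s : ℝ => 1 - s ^ 2) (-(2 * x)) x := by
        simpa using (hasDerivAt_pow 2 x).const_sub 1
      have h2 := (hasDerivAt_id x).mul (h1.pow (n + 1))
      refine h2.congr_deriv ?_
      simp only [Nat.add_sub_cancel, id, Pi.pow_apply]
      push_cast
      ring)
    (Continuous.intervalIntegrable (by fun_prop) _ _)
  rw [intervalIntegral.integral_sub (Continuous.intervalIntegrable (by fun_prop) _ _)
    (Continuous.intervalIntegrable (by fun_prop) _ _), intervalIntegral.integral_const_mul,
    intervalIntegral.integral_const_mul] at h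
  simp at h
  unfold Jw
  linarith

lemma ipL_legendre_self_aux (n : ℕ) : ipL (legendre n) (legendre n) =
    ((2 ^ n * (Nat.factorial n) : ℝ))⁻¹ ^ 2 * (2 * n).factorial * Jw n := by
  rw [legendre_eq n, ipL_smul_left, ipL_smul_right, ipL_iter n _ _ (wpol_vanish n), wpol_top]
  have : ipL (wpol n) (C ((2 * n).factorial : ℝ)) = (-1) ^ n * ((2 * n).factorial * Jw n) := by
    unfold ipL Jw wpol
    rw [← intervalIntegral.integral_const_mul, ← intervalIntegral.integral_const_mul]
    congr 1; funext s
    simp only [eval_pow, eval_sub, eval_X, eval_one, eval_C]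
    rw [show (1 - s ^ 2) = (-1) * (s ^ 2 - 1) by ring, mul_pow]
    have : ((-1:ℝ)) ^ n * (-1) ^ n = 1 := by rw [← mul_pow]; simp
    linear_combination (-(s ^ 2 - 1) ^ n * (2 * n).factorial) * this
  rw [this]
  have : ((-1:ℝ)) ^ n * (-1) ^ n = 1 := by rw [← mul_pow]; simp
  linear_combination ((2 ^ n * (Nat.factorial n) : ℝ)⁻¹ ^ 2 * (2 * n).factorial * Jw n) * this

lemma ipL_legendre_self (n : ℕ) : ipL (legendre n) (legendre n) = 2 / (2 * n + 1) := by
  rw [ipL_legendre_self_aux]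
  induction n with
  | zero => simp [Jw]; norm_num
  | succ n ih =>
    have hJ : Jw (n + 1) = (2 * n + 2) / (2 * n + 3) * Jw n := by
      have := Jw_succ n
      field_simp; linarith
    rw [hJ, show 2 * (n + 1) = 2 * n + 1 + 1 by ring, Nat.factorial_succ (2 * n + 1),
      Nat.factorial_succ (2 * n), Nat.factorial_succ n]
    have h3 : ((2 ^ (n+1) * (((n + 1) * n.factorial : ℕ)) : ℝ))⁻¹ ^ 2 *
        (((2 * n + 1 + 1) * ((2 * n + 1) * (2 * n).factorial) : ℕ) : ℝ) *
        ((2 * n + 2) / (2 * n + 3) * Jw n) =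
        (((2 ^ n * (Nat.factorial n) : ℝ))⁻¹ ^ 2 * (2 * n).factorial * Jw n) *
        ((2 * n + 1) / (2 * n + 3)) := by
      push_cast
      have : (n.factorial : ℝ) ≠ 0 := by positivity
      field_simp
      ring
    rw [h3, ih]
    push_cast
    field_simp
    ring

lemma psi_self_aux (k a b : ℕ) (hk : 1 ≤ k) (hab : a ≠ b) (ha : k ≤ a) (hb : k ≤ b + 1) :
    ipL ((Real.sqrt (4 * (k : ℝ) + 2))⁻¹ • (legendre a - legendre b))
      ((Real.sqrt (4 * (k : ℝ) + 2))⁻¹ • (legendre a - legendre b)) ≤ 8 / ((k : ℝ) + 1) ^ 2 := by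
  simp only [ipL_smul_left, ipL_smul_right, ipL_sub_left, ipL_sub_right, ipL_legendre_self,
    ipL_legendre_ne a b hab, ipL_legendre_ne b a hab.symm]
  have hs : (Real.sqrt (4 * (k : ℝ) + 2))⁻¹ * (Real.sqrt (4 * (k : ℝ) + 2))⁻¹
      = (4 * (k:ℝ) + 2)⁻¹ := by
    rw [← mul_inv, Real.mul_self_sqrt (by positivity)]
  rw [← mul_sub, ← mul_assoc, hs]
  have hk' : (1:ℝ) ≤ k := by exact_mod_cast hk
  have ha' : (k:ℝ) ≤ a := by exact_mod_cast ha
  have hb' : (k:ℝ) ≤ b + 1 := by exact_mod_cast hb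
  have e1 : (2:ℝ) / (2 * a + 1) ≤ 4 / (k + 1) := by
    rw [div_le_div_iff₀ (by positivity) (by positivity)]; linarith
  have e2 : (2:ℝ) / (2 * b + 1) ≤ 4 / (k + 1) := by
    rw [div_le_div_iff₀ (by positivity) (by positivity)]
    have : (0:ℝ) ≤ b := by positivity
    linarith
  have e3 : (4 * (k:ℝ) + 2)⁻¹ ≤ ((k:ℝ) + 1)⁻¹ := by
    apply inv_anti₀ (by positivity); linarith
  calc _ ≤ ((k:ℝ) + 1)⁻¹ * (4 / (k + 1) + 4 / (k + 1)) := by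
        apply mul_le_mul e3 (by linarith) _ (by positivity)
        have : (0:ℝ) ≤ 2 / (2 * a + 1) := by positivity
        have : (0:ℝ) ≤ 2 / (2 * b + 1) := by positivity
        linarith
    _ = _ := by field_simp; norm_num

lemma psi_self (p k : ℕ) : ipL (psi p k) (psi p k) ≤ 8 / ((k : ℝ) + 1) ^ 2 := by
  unfold psi
  split_ifs with h0 hp
  · subst h0
    simp only [ipL_smul_left, ipL_smul_right, ipL_add_left, ipL_add_right, ipL_legendre_self,
      ipL_legendre_ne 0 1 (by norm_num), ipL_legendre_ne 1 0 (by norm_num)]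
    have hs : (Real.sqrt 2)⁻¹ * (Real.sqrt 2)⁻¹ = (2:ℝ)⁻¹ := by
      rw [← mul_inv, Real.mul_self_sqrt (by positivity)]
    rw [← mul_add, ← mul_assoc, hs]; norm_num
  · subst hp
    exact psi_self_aux k k (k - 1) (by omega) (by omega) (by omega) (by omega)
  · exact psi_self_aux k (k + 1) (k - 1) (by omega) (by omega) (by omega) (by omega)

lemma psi_far (p k j : ℕ) (hj : j ≤ p) (h : k + 3 ≤ j) : ipL (psi p k) (psi p j) = 0 := by
  have hj0 : j ≠ 0 := by omega
  have hkp : k ≠ p := by omega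
  unfold psi
  simp only [hj0, hkp, if_false]
  have z : ∀ a b : ℕ, a < b → ipL (legendre a) (legendre b) = 0 :=
    fun a b hab => ipL_legendre_ne b a hab.ne'
  split_ifs with h0 hp hp
  all_goals
    simp only [ipL_smul_left, ipL_smul_right, ipL_add_left, ipL_add_right, ipL_sub_left,
      ipL_sub_right]
    repeat rw [z _ _ (by omega)]
    simp

lemma Tmat_eq (p : ℕ) (k j : Fin (p + 1)) : Tmat p k j = ipL (psi p k) (psi p j) := rfl

lemma entry_bound (p q : ℕ) (k j : Fin (p + 1)) :
    |(Tmat p - Thatmat p q) k j| ≤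
      if (k : ℕ) ≤ j + 2 ∧ (j : ℕ) ≤ k + 2 then 32 / ((q : ℝ) + 1) ^ 2 else 0 := by
  have hk := k.2
  have hj := j.2
  rw [Matrix.sub_apply, Thatmat]
  split_ifs with h1 h2 h2
  · rw [sub_self, abs_zero]; positivity
  · simp
  · rw [sub_zero, Tmat_eq]
    have key : ∀ m : ℕ, q ≤ m + 1 → ipL (psi p m) (psi p m) ≤ 32 / ((q : ℝ) + 1) ^ 2 := by
      intro m hm
      refine (psi_self p m).trans ?_
      have hm' : (q : ℝ) ≤ m + 1 := by exact_mod_cast hm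
      have : (0:ℝ) ≤ m := by positivity
      rw [div_le_div_iff₀ (by positivity) (by positivity)]
      have : ((q:ℝ) + 1) ^ 2 ≤ (2 * (m + 1)) ^ 2 := by
        apply pow_le_pow_left₀ (by positivity); linarith
      nlinarith
    have := abs_ipL_le (psi p k) (psi p j)
    have := key k (by omega)
    have := key j (by omega)
    linarith
  · rw [sub_zero, Tmat_eq]
    by_cases h : (k:ℕ) + 3 ≤ j
    · rw [psi_far p k j (by omega) h]; simp
    · rw [ipL_comm, psi_far p j k (by omega) (by omega)]; simp

lemma row_sum (p : ℕ) (M : ℝ) (hM : 0 ≤ M) (k : Fin (p + 1)) :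
    ∑ j : Fin (p + 1), (if (k : ℕ) ≤ j + 2 ∧ (j : ℕ) ≤ k + 2 then M else 0) ≤ 5 * M := by
  rw [← Finset.sum_filter, Finset.sum_const, nsmul_eq_mul]
  apply mul_le_mul_of_nonneg_right _ hM
  have : (Finset.univ.filter (fun j : Fin (p+1) => (k : ℕ) ≤ j + 2 ∧ (j : ℕ) ≤ k + 2)).card
      ≤ (Finset.Icc ((k:ℕ) - 2) (k + 2)).card := by
    apply Finset.card_le_card_of_injOn (fun j : Fin (p + 1) => (j : ℕ))
    · intro j hj
      simp at hj ⊢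
      omega
    · intro a _ b _ hab
      exact Fin.ext hab
  rw [Nat.card_Icc] at this
  exact_mod_cast (by omega : _ ≤ 5)

lemma schur_test (n : ℕ) (A : Matrix (Fin n) (Fin n) ℝ) (B : Fin n → Fin n → ℝ) (M : ℝ)
    (hM : 0 ≤ M) (hA : ∀ k j, |A k j| ≤ B k j) (hr : ∀ k, ∑ j, B k j ≤ M)
    (hc : ∀ j, ∑ k, B k j ≤ M) : ‖Matrix.toEuclideanCLM (𝕜 := ℝ) A‖ ≤ M := by
  have hB : ∀ k j, 0 ≤ B k j := fun k j => (abs_nonneg _).trans (hA k j)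
  refine ContinuousLinearMap.opNorm_le_bound _ hM (fun x => ?_)
  apply le_of_sq_le_sq _ (by positivity)
  rw [mul_pow, EuclideanSpace.real_norm_sq_eq, EuclideanSpace.real_norm_sq_eq]
  have e : ∀ k, (Matrix.toEuclideanCLM (𝕜 := ℝ) A x) k = ∑ j, A k j * x j := by
    intro k
    simp [Matrix.mulVec, dotProduct]
  have step : ∀ k, (Matrix.toEuclideanCLM (𝕜 := ℝ) A x) k ^ 2 ≤ M * ∑ j, B k j * x j ^ 2 := by
    intro k
    rw [e k]
    have h1 : |∑ j, A k j * x j| ≤ ∑ j, B k j * |x j| := by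
      refine (Finset.abs_sum_le_sum_abs _ _).trans (Finset.sum_le_sum fun j _ => ?_)
      rw [abs_mul]
      exact mul_le_mul_of_nonneg_right (hA k j) (abs_nonneg _)
    have h2 : (∑ j, B k j * |x j|) ^ 2 ≤ (∑ j, B k j) * ∑ j, B k j * x j ^ 2 := by
      apply Finset.sum_sq_le_sum_mul_sum_of_sq_eq_mul
      · exact fun j _ => hB k j
      · exact fun j _ => mul_nonneg (hB k j) (sq_nonneg _)
      · intro j _; rw [mul_pow, sq_abs]; ring
    calc _ = |∑ j, A k j * x j| ^ 2 := (sq_abs _).symm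
      _ ≤ (∑ j, B k j * |x j|) ^ 2 := pow_le_pow_left₀ (abs_nonneg _) h1 2
      _ ≤ _ := h2
      _ ≤ _ := mul_le_mul_of_nonneg_right (hr k)
        (Finset.sum_nonneg fun j _ => mul_nonneg (hB k j) (sq_nonneg _))
  calc _ ≤ ∑ k, M * ∑ j, B k j * x j ^ 2 := Finset.sum_le_sum fun k _ => step k
    _ = M * ∑ j, (∑ k, B k j) * x j ^ 2 := by
      rw [← Finset.mul_sum, Finset.sum_comm]
      simp_rw [Finset.sum_mul]
    _ ≤ M * ∑ j, M * x j ^ 2 := by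
      apply mul_le_mul_of_nonneg_left _ hM
      exact Finset.sum_le_sum fun j _ => mul_le_mul_of_nonneg_right (hc j) (sq_nonneg _)
    _ = _ := by rw [← Finset.mul_sum]; ring

/-- **Spectral norm estimate for the truncation.** There is a constant `C > 0`, independent
of `p` and `q`, such that for every `p ≥ 2` and every `0 ≤ q ≤ p−1`,
`‖T − T̂_q‖₂ ≤ C (q+1)⁻²`, where `‖·‖₂` is the matrix 2-norm (the operator norm on
Euclidean space). -/
theorem truncation_spectral_norm_bound :
    ∃ C : ℝ, 0 < C ∧ ∀ p : ℕ, 2 ≤ p → ∀ q : ℕ, q ≤ p - 1 →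
      ‖Matrix.toEuclideanCLM (𝕜 := ℝ) (Tmat p - Thatmat p q)‖ ≤ C / ((q : ℝ) + 1) ^ 2 := by
  refine ⟨5 * 32, by norm_num, fun p _ q _ => ?_⟩
  have hM : (0:ℝ) ≤ 32 / ((q : ℝ) + 1) ^ 2 := by positivity
  rw [mul_div_assoc]
  refine schur_test _ _ _ _ (by positivity) (entry_bound p q) (row_sum p _ hM) (fun j => ?_)
  refine le_trans (le_of_eq ?_) (row_sum p _ hM j)
  refine Finset.sum_congr rfl fun k _ => ?_
  simp only [and_comm]
end

section
/- Let p ≥ 2. Let Z be the (p+1)×(p+1) matrix with ψ_k = Σ_{j=0}^p Z_{kj} L_j, let D := diag{2/(2j+1)}_{j=0}^p, and let T := Z D Zᵀ. Let V be an orthogonal (p+1)×(p+1) matrix with T V = V diag{λ_j}_{j=0}^p, and define the eigenfunctions φ_j := Σ_{k=0}^p V_{kj} ψ_k. Define K* := K̃ − x yᵀ, where K̃_{kj} := (1 − (−1)^{k−j})(j + 1/2) if j ≤ k and 0 otherwise, x_j := (−1)^j, and y_k := (−1)^{1−k}(k + 1/2). Then for each k = 0, …, p, (I φ_k)' = Σ_{j=0}^p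 K_{kj} φ_j, where K := Vᵀ D^{−1/2} K* D^{1/2} V. -/
open Polynomial Matrix

/-- The matrix `K̃`, with `K̃_{kj} := (1 − (−1)^{k−j})(j + 1/2)` if `j ≤ k` and `0`
otherwise. -/
noncomputable def Ktilde (p : ℕ) : Matrix (Fin (p + 1)) (Fin (p + 1)) ℝ :=
  Matrix.of fun (k j : Fin (p + 1)) =>
    if (j : ℕ) ≤ (k : ℕ) then (1 - (-1 : ℝ) ^ ((k : ℕ) - (j : ℕ))) * ((j : ℝ) + 1 / 2) else 0

/-- The matrix `K* := K̃ − x yᵀ`, with `x_j := (−1)^j` and `y_k := (−1)^{1−k}(k + 1/2)`. -/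
noncomputable def Kstar (p : ℕ) : Matrix (Fin (p + 1)) (Fin (p + 1)) ℝ :=
  Ktilde p - Matrix.of fun (k j : Fin (p + 1)) =>
    ((-1 : ℝ) ^ (k : ℕ)) * ((-1 : ℝ) ^ ((1 : ℤ) - (j : ℤ)) * ((j : ℝ) + 1 / 2))

/-- `D^{1/2} = diag{√(2/(2j+1))}`. -/
noncomputable def Dhalf (p : ℕ) : Matrix (Fin (p + 1)) (Fin (p + 1)) ℝ :=
  Matrix.diagonal fun j : Fin (p + 1) => Real.sqrt (2 / (2 * (j : ℝ) + 1))

/-- `D^{−1/2} = diag{√(2/(2j+1))⁻¹}`. -/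
noncomputable def DhalfInv (p : ℕ) : Matrix (Fin (p + 1)) (Fin (p + 1)) ℝ :=
  Matrix.diagonal fun j : Fin (p + 1) => (Real.sqrt (2 / (2 * (j : ℝ) + 1)))⁻¹

theorem lg_scale (k : ℕ) : derivative (derivative ((X ^ 2 - 1 : ℝ[X]) ^ (k + 2)))
    = (2 * (k + 2) : ℝ) • ((2 * (k + 1) + 1 : ℝ) • (X ^ 2 - 1 : ℝ[X]) ^ (k + 1)
      + (2 * (k + 1) : ℝ) • (X ^ 2 - 1 : ℝ[X]) ^ k) := by
  simp only [derivative_pow, derivative_sub, derivative_mul, derivative_X, derivative_one,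
    smul_eq_C_mul, derivative_natCast, derivative_C]
  simp
  ring

theorem lg_deriv (k : ℕ) : derivative (legendre (k + 2))
    = (2 * (k + 1) + 1 : ℝ) • legendre (k + 1) + derivative (legendre k) := by
  unfold legendre
  rw [derivative_smul, derivative_smul, ← Function.iterate_succ_apply' (fun q => derivative q),
    ← Function.iterate_succ_apply' (fun q => derivative q),
    show (k + 2).succ = (k + 1) + 2 from rfl, Function.iterate_add_apply]
  have h2 : (fun q : ℝ[X] => derivative q)^[2] ((X ^ 2 - 1 : ℝ[X]) ^ (k + 2))
    = derivative (derivative ((X ^ 2 - 1 : ℝ[X]) ^ (k + 2))) := rfl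
  rw [h2, lg_scale]
  have e : (fun q : ℝ[X] => derivative q) = ⇑(derivative : ℝ[X] →ₗ[ℝ] ℝ[X]) := rfl
  rw [e, iterate_derivative_smul, iterate_map_add, iterate_derivative_smul,
    iterate_derivative_smul, smul_add, smul_add, smul_smul, smul_smul, smul_smul, smul_smul, smul_smul]
  have hk : (Nat.factorial k : ℝ) ≠ 0 := by positivity
  congr 2
  · rw [Nat.factorial_succ (k + 1), Nat.factorial_succ k]
    push_cast
    have : (k : ℝ) + 2 ≠ 0 := by positivity
    have : (k : ℝ) + 1 ≠ 0 := by positivity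
    have : (k : ℝ) + 1 + 1 ≠ 0 := by positivity
    field_simp
    ring
  · rw [Nat.factorial_succ (k + 1), Nat.factorial_succ k]
    push_cast
    have : (k : ℝ) + 2 ≠ 0 := by positivity
    have : (k : ℝ) + 1 ≠ 0 := by positivity
    have : (k : ℝ) + 1 + 1 ≠ 0 := by positivity
    field_simp
    ring

theorem lg_eval (k : ℕ) : (legendre k).eval (-1) = (-1) ^ k := by
  unfold legendre
  have e : (fun q : ℝ[X] => derivative q) = ⇑(derivative : ℝ[X] →ₗ[ℝ] ℝ[X]) := rfl
  have h : (X ^ 2 - 1 : ℝ[X]) ^ k = (X - C (-1)) ^ k * (X - 1) ^ k := by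
    rw [← mul_pow]; congr 1; simp; ring
  have h3 : (taylor (-1) ((X ^ 2 - 1 : ℝ[X]) ^ k)).coeff k = (-2) ^ k := by
    rw [h, taylor_mul, taylor_pow, taylor_pow]
    have : taylor (-1) (X - C (-1) : ℝ[X]) = X := by simp
    rw [this, coeff_X_pow_mul', if_pos le_rfl, Nat.sub_self, coeff_zero_eq_eval_zero, eval_pow]
    simp; norm_num
  rw [e, eval_smul, ← factorial_smul_hasseDeriv]
  rw [taylor_coeff] at h3
  simp only [LinearMap.smul_apply, eval_smul, h3]
  have hk : (Nat.factorial k : ℝ) ≠ 0 := by positivity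
  rw [smul_eq_mul, nsmul_eq_mul, show (-2 : ℝ) = 2 * (-1) by norm_num, mul_pow]
  field_simp

theorem lg_zero : legendre 0 = 1 := by simp [legendre]

theorem lg_one : legendre 1 = X := by
  simp [legendre, smul_eq_C_mul, ← mul_assoc]
  rw [show (1 + 1 : ℝ[X]) = C 2 by rw [one_add_one_eq_two]; rfl, ← C_mul]; norm_num

/-- rescaled basis: `chi k = D^{1/2}_k ψ_k`. -/
noncomputable def chi (p k : ℕ) : ℝ[X] := Real.sqrt (2 / (2 * (k : ℝ) + 1)) • psi p k

theorem sqrt_aux (k : ℕ) : Real.sqrt (2 / (2 * (k : ℝ) + 1)) * (Real.sqrt (4 * (k : ℝ) + 2))⁻¹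
    = 1 / (2 * k + 1) := by
  have h : (0 : ℝ) < 2 * k + 1 := by positivity
  rw [← Real.sqrt_inv, ← Real.sqrt_mul (by positivity),
    show 2 / (2 * (k : ℝ) + 1) * (4 * (k : ℝ) + 2)⁻¹ = (1 / (2 * k + 1)) ^ 2 by
      rw [show 4 * (k : ℝ) + 2 = 2 * (2 * k + 1) by ring]; field_simp]
  exact Real.sqrt_sq (by positivity)

theorem chi_zero (p : ℕ) : chi p 0 = legendre 1 + legendre 0 := by
  simp [chi, psi, smul_smul]

theorem chi_last (p : ℕ) (hp : 2 ≤ p) :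
    chi p p = (1 / (2 * p + 1) : ℝ) • (legendre p - legendre (p - 1)) := by
  rw [chi, psi, if_neg (by omega), if_pos rfl, smul_smul, sqrt_aux]

theorem chi_mid (p k : ℕ) (hk : k + 1 < p) :
    chi p (k + 1) = (1 / (2 * (k + 1) + 1) : ℝ) • (legendre (k + 2) - legendre k) := by
  rw [chi, psi, if_neg (by omega), if_neg (by omega), smul_smul, sqrt_aux]
  push_cast; rfl

theorem recon_chi (p k : ℕ) (hp : 2 ≤ p) (hk : k ≤ p) :
    derivative (recon p (chi p k)) = legendre k := by
  obtain ⟨q, rfl⟩ : ∃ q, p = q + 1 := ⟨p - 1, by omega⟩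
  have key : ∀ k : ℕ, derivative ((1 / (2 * (k + 1) + 1) : ℝ) • (legendre (k + 2) - legendre k))
      = legendre (k + 1) := by
    intro k
    have : (2 * (k + 1) + 1 : ℝ) ≠ 0 := by positivity
    rw [derivative_smul, derivative_sub, lg_deriv, add_sub_cancel_right, smul_smul,
      one_div_mul_cancel this, one_smul]
  rcases k with _ | k
  · rw [chi_zero, recon]
    simp only [eval_add, lg_eval]
    simp [lg_zero, lg_one]
  · rcases hk.lt_or_eq with h | h
    · rw [chi_mid _ _ h, recon, ← key k]
      simp only [eval_smul, eval_sub, lg_eval]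
      simp [pow_succ]
    · obtain rfl : k = q := by omega
      rw [chi_last _ hp, recon]
      refine Eq.trans (congrArg _ ?_) (key k)
      simp only [eval_smul, eval_sub, lg_eval, Nat.add_sub_cancel]
      have hs : ((-1 : ℝ) ^ k) * (-1) ^ k = 1 := by rw [← mul_pow]; simp
      have : (2 * (k + 1) + 1 : ℝ) ≠ 0 := by positivity
      rw [show ((1 / (2 * ((k + 1 : ℕ) : ℝ) + 1)) • ((-1 : ℝ) ^ (k + 1) - (-1) ^ k) * (-1) ^ (k + 1) / 2)
        = 1 / (2 * (k + 1) + 1) by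
          push_cast
          rw [smul_eq_mul, pow_succ]
          linear_combination (1 / (2 * ((k : ℝ) + 1) + 1)) * hs]
      push_cast
      rw [← smul_sub]
      congr 1
      ring

theorem Kstar_apply (p : ℕ) (k j : Fin (p + 1)) : Kstar p k j =
    (if (j : ℕ) ≤ k then (1 : ℝ) else (-1) ^ ((k : ℕ) + j)) * ((j : ℝ) + 1 / 2) := by
  have hs : ((-1 : ℝ) ^ (j : ℕ)) * (-1) ^ (j : ℕ) = 1 := by rw [← mul_pow]; simp
  have hz : (-1 : ℝ) ^ ((1 : ℤ) - (j : ℤ)) = - (-1) ^ (j : ℕ) := by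
    rw [zpow_sub₀ (by norm_num), zpow_one, zpow_natCast]
    rw [div_eq_iff (by simp)]
    linear_combination hs
  simp only [Kstar, Ktilde, Matrix.sub_apply, Matrix.of_apply, hz]
  split_ifs with h
  · obtain ⟨d, hd⟩ := Nat.exists_eq_add_of_le h
    rw [hd, Nat.add_sub_cancel_left, pow_add]
    linear_combination ((-1 : ℝ) ^ d * ((j : ℝ) + 1 / 2)) * hs
  · rw [pow_add]; ring

/-- `(j+1/2) χ_j` for index `j`. -/
theorem chi_half_mid (p k : ℕ) (hk : k + 1 < p) :
    (((k + 1 : ℕ) : ℝ) + 1 / 2) • chi p (k + 1) = (1 / 2 : ℝ) • (legendre (k + 2) - legendre k) := by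
  rw [chi_mid _ _ hk, smul_smul]
  congr 1
  have : (2 * (k + 1) + 1 : ℝ) ≠ 0 := by positivity
  push_cast
  field_simp

theorem chi_half_last (p : ℕ) (hp : 2 ≤ p) :
    ((p : ℝ) + 1 / 2) • chi p p = (1 / 2 : ℝ) • (legendre p - legendre (p - 1)) := by
  rw [chi_last _ hp, smul_smul]
  congr 1
  have : (2 * p + 1 : ℝ) ≠ 0 := by positivity
  field_simp

/-- lower partial sums -/
theorem low_sum (p n : ℕ) (hn : n < p) :
    ∑ j ∈ Finset.range (n + 1), ((j : ℝ) + 1 / 2) • chi p j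
      = (1 / 2 : ℝ) • (legendre (n + 1) + legendre n) := by
  induction n with
  | zero => simp [chi_zero]
  | succ n ih =>
    rw [Finset.sum_range_succ, ih (by omega), chi_half_mid _ _ hn]
    module

/-- alternating partial sums -/
theorem alt_sum (p k n : ℕ) (hn : k + n < p) :
    ∑ j ∈ Finset.range n, ((-1 : ℝ) ^ (j + 1)) • ((((k + j + 1 : ℕ) : ℝ) + 1 / 2) • chi p (k + j + 1))
      = (1 / 2 : ℝ) • ((-1 : ℝ) ^ n • (legendre (k + n + 1) - legendre (k + n))
        - (legendre (k + 1) - legendre k)) := by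
  induction n with
  | zero => simp
  | succ n ih =>
    rw [Finset.sum_range_succ, ih (by omega), chi_half_mid _ _ (by omega)]
    simp only [pow_succ, ← add_assoc, show k + n + 2 = k + n + 1 + 1 from rfl]
    module

theorem Kstar_chi (p : ℕ) (hp : 2 ≤ p) (k : Fin (p + 1)) :
    ∑ j : Fin (p + 1), Kstar p k j • chi p j = legendre k := by
  simp only [Kstar_apply]
  obtain ⟨k, hk⟩ := k
  simp only
  rw [Fin.sum_univ_eq_sum_range (fun j => ((if j ≤ k then (1 : ℝ) else (-1) ^ (k + j))
    * ((j : ℝ) + 1 / 2)) • chi p j)]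
  simp only [mul_smul]
  rcases (Nat.lt_succ_iff.mp hk).lt_or_eq with h | rfl
  · obtain ⟨n, rfl⟩ : ∃ n, p = k + n + 1 := ⟨p - k - 1, by omega⟩
    rw [show k + n + 1 + 1 = (k + 1) + (n + 1) by ring, Finset.sum_range_add]
    have h1 := low_sum (k + n + 1) k h
    have h2 := alt_sum (k + n + 1) k n (by omega)
    have h3 := chi_half_last (k + n + 1) hp
    rw [Nat.add_sub_cancel] at h3
    have hs : ∀ j : ℕ, ((-1 : ℝ) ^ (k + (k + 1 + j))) = (-1) ^ (j + 1) := by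
      intro j
      rw [show k + (k + 1 + j) = 2 * k + (j + 1) by ring, pow_add, pow_mul]; simp
    have e1 : ∑ j ∈ Finset.range (k + 1), (if j ≤ k then (1 : ℝ) else (-1) ^ (k + j)) •
        ((j : ℝ) + 1 / 2) • chi (k + n + 1) j
        = (1 / 2 : ℝ) • (legendre (k + 1) + legendre k) := by
      rw [← h1]
      refine Finset.sum_congr rfl fun j hj => ?_
      rw [if_pos (by have := Finset.mem_range.mp hj; omega), one_smul]
    have e2 : ∑ j ∈ Finset.range (n + 1), (if k + 1 + j ≤ k then (1 : ℝ) else (-1) ^ (k + (k + 1 + j))) •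
        (((k + 1 + j : ℕ) : ℝ) + 1 / 2) • chi (k + n + 1) (k + 1 + j)
        = - ((1 / 2 : ℝ) • (legendre (k + 1) - legendre k)) := by
      have : ∀ j ∈ Finset.range (n + 1),
        (if k + 1 + j ≤ k then (1 : ℝ) else (-1) ^ (k + (k + 1 + j))) •
        (((k + 1 + j : ℕ) : ℝ) + 1 / 2) • chi (k + n + 1) (k + 1 + j) =
        ((-1 : ℝ) ^ (j + 1)) • ((((k + j + 1 : ℕ) : ℝ) + 1 / 2) • chi (k + n + 1) (k + j + 1)) := by
        intro j _
        rw [if_neg (by omega), hs, show k + 1 + j = k + j + 1 by ring]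
      rw [Finset.sum_congr rfl this, Finset.sum_range_succ, h2, h3, pow_succ]
      module
    have e3 : k + n + 1 = k + 1 + n := by ring
    rw [e1]
    erw [e2]
    module
  · obtain ⟨q, rfl⟩ : ∃ q, k = q + 1 := ⟨k - 1, by omega⟩
    have : ∀ j ∈ Finset.range (q + 1 + 1),
        (if j ≤ q + 1 then (1 : ℝ) else (-1) ^ (q + 1 + j)) • ((j : ℝ) + 1 / 2) • chi (q + 1) j
        = ((j : ℝ) + 1 / 2) • chi (q + 1) j := by
      intro j hj
      rw [if_pos (by have := Finset.mem_range.mp hj; omega), one_smul]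
    rw [Finset.sum_congr rfl this, Finset.sum_range_succ, low_sum _ _ (by omega),
      chi_half_last _ hp, Nat.add_sub_cancel]
    module

/-- `v ↦ (I v)'` as a linear map. -/
noncomputable def reconD (p : ℕ) : ℝ[X] →ₗ[ℝ] ℝ[X] where
  toFun v := derivative (recon p v)
  map_add' u v := by
    rw [← derivative_add]; congr 1
    simp only [recon, eval_add]; module
  map_smul' c v := by
    rw [RingHom.id_apply, ← derivative_smul]; congr 1
    simp only [recon, eval_smul, smul_eq_mul]; module

theorem reconD_psi (p : ℕ) (hp : 2 ≤ p) (i : Fin (p + 1)) :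
    reconD p (psi p i) = ∑ j : Fin (p + 1), (DhalfInv p * Kstar p * Dhalf p) i j • psi p j := by
  have hpos : Real.sqrt (2 / (2 * ((i : ℕ) : ℝ) + 1)) ≠ 0 :=
    Real.sqrt_ne_zero'.mpr (by positivity)
  have h1 : psi p i = (Real.sqrt (2 / (2 * ((i : ℕ) : ℝ) + 1)))⁻¹ • chi p i := by
    rw [chi, smul_smul, inv_mul_cancel₀ hpos, one_smul]
  have h2 : reconD p (chi p i) = legendre i := recon_chi p i hp (by omega)
  rw [h1, map_smul, h2, ← Kstar_chi p hp i, Finset.smul_sum]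
  refine Finset.sum_congr rfl fun j _ => ?_
  rw [DhalfInv, Dhalf, Matrix.mul_diagonal, Matrix.diagonal_mul, chi, smul_smul, smul_smul]

/-- **Lemma (representation of the reconstruction derivative in the eigenbasis).** Let
`p ≥ 2`, let `Z` be the matrix with `ψ_k = Σ_j Z_{kj} L_j`, let `D := diag{2/(2j+1)}`,
`T := Z D Zᵀ`, and let `V` be orthogonal with `T V = V diag{λ_j}`. Define the eigenfunctions
`φ_j := Σ_k V_{kj} ψ_k`. Then for each `k = 0, …, p`, `(I φ_k)' = Σ_j K_{kj} φ_j`, where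
`K := Vᵀ D^{−1/2} K* D^{1/2} V`. -/
theorem recon_deriv_eigenbasis (p : ℕ) (hp : 2 ≤ p)
    (Z V : Matrix (Fin (p + 1)) (Fin (p + 1)) ℝ) (lam : Fin (p + 1) → ℝ)
    (hZ : ∀ k : Fin (p + 1), psi p (k : ℕ) = ∑ j : Fin (p + 1), Z k j • legendre (j : ℕ))
    (hV₁ : Vᵀ * V = 1) (hV₂ : V * Vᵀ = 1)
    (hTV : (Z * Matrix.diagonal (fun j : Fin (p + 1) => 2 / (2 * (j : ℝ) + 1)) * Zᵀ) * V
        = V * Matrix.diagonal lam) :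
    ∀ k : Fin (p + 1),
      Polynomial.derivative (recon p (∑ i : Fin (p + 1), V i k • psi p (i : ℕ)))
        = ∑ j : Fin (p + 1),
            (Vᵀ * DhalfInv p * Kstar p * Dhalf p * V) k j •
              ∑ i : Fin (p + 1), V i j • psi p (i : ℕ) := by
  intro k
  change reconD p _ = _
  simp only [map_sum, map_smul, reconD_psi p hp, Finset.smul_sum, smul_smul]
  rw [Finset.sum_comm]
  conv_rhs => rw [Finset.sum_comm]
  refine Finset.sum_congr rfl fun j _ => ?_
  rw [← Finset.sum_smul, ← Finset.sum_smul]
  congr 1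
  have h : Vᵀ * (DhalfInv p * Kstar p * Dhalf p)
      = (Vᵀ * DhalfInv p * Kstar p * Dhalf p * V) * Vᵀ := by
    rw [Matrix.mul_assoc _ V, hV₂, Matrix.mul_one]
    simp only [Matrix.mul_assoc]
  have h' := congrFun (congrFun h k) j
  rw [Matrix.mul_apply, Matrix.mul_apply (N := Vᵀ)] at h'
  simpa only [Matrix.transpose_apply] using h'
end
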